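/- arXiv:math/0508171 — 4 statements merged into one kernel-verified Lean document; each statement's English description precedes it below -/
import Mathlib

section
/- For every k = 0, 1, 2, …, the matrix of out-forests with k arcs is the following polynomial in the Laplacian matrix: Q_k = Σ_{i=0}^{k} σ_{k−i} (−L)^i. -/
/-!
The identity follows by induction on `k` from `Q_0 = I`, `σ_0 = 1` and the recursion
`Q_{k+1} = σ_{k+1} I - Q_k L` (`Qmat_succ`).

The `(i, j)` entry of `-Q_k L` is the sum, over out-forests `F` with `k` arcs and vertices `m`,
of `w(F) w_mj ([m ∈ T_i(F)] - [j ∈ T_i(F)])`, where `T_i(F)` is the tree of `F` diverging from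
the root `i` (empty if `i` is not a root). The recursion rests on classifying out-forests by the
arc entering `j`: an out-forest in which `j` is not a root is obtained in exactly one way from an
out-forest `G` rooted at `j` by adding an arc `(p, j)` with `p` not in the tree of `j`
(`sum_nonroot`).

* The out-forests `F = G + (p, j)` contribute nothing in total to the entry of `-Q_k L`. If `m`
  lies in the tree of `j` in `G`, then `T_i(F)` contains both or neither of `m` and `j`;
  otherwise, for `i ≠ j`, the contribution of `(p, m)` is
  `w(G) w_pj w_mj ([m ∈ T_i(G)] - [p ∈ T_i(G)])`, which is antisymmetric in `p` and `m`. For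
  `i = j` every term vanishes (`sum_nonroot_eq_zero`).
* The out-forests with root `j` contribute, through the same bijection applied with `k + 1` arcs,
  the entry `(i, j)` of `Q_{k+1}` if `i ≠ j`, and minus the weight of the out-forests with `k + 1`
  arcs in which `j` is not a root, that is `(Q_{k+1})_jj - σ_{k+1}`, if `i = j`.
-/

open Matrix Finset

namespace ForestMatrix

variable {n : ℕ}

/-- Reachability from `i` to `j` within a finite set `F` of arcs. -/
def FReach (F : Finset (Fin n × Fin n)) (i j : Fin n) : Prop :=
  Relation.ReflTransGen (fun a b => (a, b) ∈ F) i j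

/-- `F` is (the arc set of) a spanning diverging forest (out-forest) of the digraph whose
positive arc weights are recorded in `W`: all arcs of `F` are arcs of the digraph, every
vertex has indegree at most one, and there are no directed cycles. -/
def IsOutForest (W : Matrix (Fin n) (Fin n) ℝ) (F : Finset (Fin n × Fin n)) : Prop :=
  (∀ e ∈ F, 0 < W e.1 e.2) ∧
  (∀ v : Fin n, ({e ∈ F | e.2 = v} : Finset (Fin n × Fin n)).card ≤ 1) ∧
  (∀ v : Fin n, ¬ Relation.TransGen (fun a b => (a, b) ∈ F) v v)

/-- The weight of a (sub)digraph: the product of its arc weights. -/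
noncomputable def wt (W : Matrix (Fin n) (Fin n) ℝ) (F : Finset (Fin n × Fin n)) : ℝ :=
  ∏ e ∈ F, W e.1 e.2

/-- The weight of a set of digraphs: the sum of their weights. -/
noncomputable def wtSet (W : Matrix (Fin n) (Fin n) ℝ)
    (G : Finset (Finset (Fin n × Fin n))) : ℝ :=
  ∑ F ∈ G, wt W F

open scoped Classical in
/-- The set of all out-forests of the digraph with weight matrix `W`. -/
noncomputable def allOutForests (W : Matrix (Fin n) (Fin n) ℝ) :
    Finset (Finset (Fin n × Fin n)) :=
  Finset.univ.filter (fun F => IsOutForest W F)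

open scoped Classical in
/-- The set of all out-forests with `k` arcs. -/
noncomputable def outForests (W : Matrix (Fin n) (Fin n) ℝ) (k : ℕ) :
    Finset (Finset (Fin n × Fin n)) :=
  Finset.univ.filter (fun F => IsOutForest W F ∧ F.card = k)

/-- The number of arcs of a maximum out-forest; it equals `n - d'` where `d'` is the
out-forest dimension. -/
noncomputable def maxArcs (W : Matrix (Fin n) (Fin n) ℝ) : ℕ :=
  (allOutForests W).sup Finset.card

/-- `σ_k`: the total weight of the out-forests with `k` arcs. -/
noncomputable def sigma (W : Matrix (Fin n) (Fin n) ℝ) (k : ℕ) : ℝ :=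
  wtSet W (outForests W k)

/-- `j` belongs to the tree of the forest `F` diverging from `i`:
`i` is a root of `F` and `j` is reachable from `i` in `F`. -/
def inTreeOf (F : Finset (Fin n × Fin n)) (i j : Fin n) : Prop :=
  (∀ e ∈ F, e.2 ≠ i) ∧ FReach F i j

open scoped Classical in
/-- `Q_k`: the matrix of out-forests with `k` arcs; its `(i,j)` entry is the total weight of
the out-forests with `k` arcs in which `j` belongs to a tree diverging from `i`. -/
noncomputable def Qmat (W : Matrix (Fin n) (Fin n) ℝ) (k : ℕ) :
    Matrix (Fin n) (Fin n) ℝ :=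
  fun i j => wtSet W ((outForests W k).filter (fun F => inTreeOf F i j))

/-- The column Laplacian matrix of the digraph with weight matrix `W`. -/
noncomputable def Lap (W : Matrix (Fin n) (Fin n) ℝ) : Matrix (Fin n) (Fin n) ℝ :=
  fun i j => if i = j then ∑ k ∈ Finset.univ.erase i, W k i else -W i j

/-- `σ(τ) = Σ_{k=0}^{n-d'} σ_k τ^k`. -/
noncomputable def sigmaTau (W : Matrix (Fin n) (Fin n) ℝ) (τ : ℝ) : ℝ :=
  ∑ k ∈ Finset.range (maxArcs W + 1), sigma W k * τ ^ k

/-- `Q(τ) = Σ_{k=0}^{n-d'} Q_k τ^k`. -/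
noncomputable def QTau (W : Matrix (Fin n) (Fin n) ℝ) (τ : ℝ) :
    Matrix (Fin n) (Fin n) ℝ :=
  ∑ k ∈ Finset.range (maxArcs W + 1), τ ^ k • Qmat W k

/-- `J(τ) = σ(τ)⁻¹ Q(τ)`. -/
noncomputable def JTau (W : Matrix (Fin n) (Fin n) ℝ) (τ : ℝ) :
    Matrix (Fin n) (Fin n) ℝ :=
  (sigmaTau W τ)⁻¹ • QTau W τ

/-- `J̃ = σ_{n-d'}⁻¹ Q_{n-d'}`: the normalized matrix of maximum out-forests. -/
noncomputable def Jtil (W : Matrix (Fin n) (Fin n) ℝ) : Matrix (Fin n) (Fin n) ℝ :=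
  (sigma W (maxArcs W))⁻¹ • Qmat W (maxArcs W)

/-- Reachability in the digraph with weight matrix `W`. -/
def Reach (W : Matrix (Fin n) (Fin n) ℝ) (i j : Fin n) : Prop :=
  Relation.ReflTransGen (fun a b => 0 < W a b) i j

/-- `K` is a source knot of the digraph: `K` is the vertex set of a bicomponent
(a maximal strongly connected subgraph) and no arc enters `K` from outside. -/
def IsSourceKnot (W : Matrix (Fin n) (Fin n) ℝ) (K : Finset (Fin n)) : Prop :=
  (∃ i, ∀ j, j ∈ K ↔ (Reach W i j ∧ Reach W j i)) ∧
  (∀ j k, k ∈ K → 0 < W j k → j ∈ K)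

/-! ### Reachability in forests -/

/-- A path using the arc `(a, b)` follows paths of `G` up to the first visit to `a` and after
the last visit to `b`. -/
theorem FReach.insert_iff {G : Finset (Fin n × Fin n)} {a b i v : Fin n} :
    FReach (insert (a, b) G) i v ↔ FReach G i v ∨ (FReach G i a ∧ FReach G b v) := by
  constructor
  · intro h
    induction h with
    | refl => exact Or.inl .refl
    | tail _ hcd ih =>
      rcases Finset.mem_insert.1 hcd with he | he
      · obtain ⟨rfl, rfl⟩ := Prod.mk.inj he
        rcases ih with h | h
        · exact Or.inr ⟨h, .refl⟩
        · exact Or.inr ⟨h.1, .refl⟩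
      · rcases ih with h | h
        · exact Or.inl (h.tail he)
        · exact Or.inr ⟨h.1, h.2.tail he⟩
  · have mono : ∀ {x y}, FReach G x y → FReach (insert (a, b) G) x y := fun h =>
      Relation.ReflTransGen.mono (fun _ _ h => Finset.mem_insert_of_mem h) _ _ h
    rintro (h | ⟨h, hb⟩)
    · exact mono h
    · exact ((mono h).tail (Finset.mem_insert_self _ _)).trans (mono hb)

/-- No vertex other than the root `i` itself reaches `i`. -/
theorem FReach.eq_of_root {F : Finset (Fin n × Fin n)} {i j : Fin n}
    (h : FReach F j i) (hi : ∀ e ∈ F, e.2 ≠ i) : j = i := by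
  rcases Relation.ReflTransGen.cases_tail h with h | ⟨c, _, hc⟩
  · exact h.symm
  · exact absurd rfl (hi _ hc)

theorem IsOutForest.parent_unique {W : Matrix (Fin n) (Fin n) ℝ} {F : Finset (Fin n × Fin n)}
    (hF : IsOutForest W F) {a b v : Fin n} (ha : (a, v) ∈ F) (hb : (b, v) ∈ F) : a = b :=
  congrArg Prod.fst (Finset.card_le_one.1 (hF.2.1 v) (a, v) (by simp [ha]) (b, v) (by simp [hb]))

/-- A vertex of an out-forest is reachable from only one root. -/
theorem IsOutForest.root_unique {W : Matrix (Fin n) (Fin n) ℝ} {F : Finset (Fin n × Fin n)}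
    (hF : IsOutForest W F) {i j m : Fin n} (hi : ∀ e ∈ F, e.2 ≠ i) (hj : ∀ e ∈ F, e.2 ≠ j)
    (him : FReach F i m) (hjm : FReach F j m) : i = j := by
  induction him with
  | refl => exact (hjm.eq_of_root hi).symm
  | tail _ hcd ih =>
    rcases Relation.ReflTransGen.cases_tail hjm with h | ⟨c', hc', hcd'⟩
    · exact absurd h (hj _ hcd)
    · rw [hF.parent_unique hcd' hcd] at hc'
      exact ih hc'

theorem IsOutForest.subset {W : Matrix (Fin n) (Fin n) ℝ} {F G : Finset (Fin n × Fin n)}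
    (hF : IsOutForest W F) (h : G ⊆ F) : IsOutForest W G :=
  ⟨fun e he => hF.1 e (h he),
    fun v => (Finset.card_le_card (Finset.filter_subset_filter _ h)).trans (hF.2.1 v),
    fun v hv => hF.2.2 v (Relation.TransGen.mono (fun _ _ hab => h hab) _ _ hv)⟩

/-- Joining the root `j` to a vertex `m` outside its tree gives an out-forest. -/
theorem IsOutForest.insert {W : Matrix (Fin n) (Fin n) ℝ} {G : Finset (Fin n × Fin n)}
    (hG : IsOutForest W G) {m j : Fin n} (hj : ∀ e ∈ G, e.2 ≠ j) (hm : ¬ FReach G j m)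
    (hw : 0 < W m j) : IsOutForest W (insert (m, j) G) := by
  refine ⟨?_, ?_, ?_⟩
  · intro e he
    rcases Finset.mem_insert.1 he with rfl | he
    · exact hw
    · exact hG.1 e he
  · intro v
    rw [Finset.filter_insert]
    split_ifs with h
    · have : ({e ∈ G | e.2 = v} : Finset (Fin n × Fin n)) = ∅ :=
        Finset.filter_eq_empty_iff.2 fun e he h' => hj e he (h'.trans h.symm)
      simp [this]
    · exact hG.2.1 v
  · intro v hv
    obtain ⟨c, hvc, hcv⟩ := Relation.TransGen.tail'_iff.1 hv
    have hvc : FReach (Insert.insert (m, j) G) v c := hvc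
    rw [FReach.insert_iff] at hvc
    rcases Finset.mem_insert.1 hcv with he | he
    · obtain ⟨rfl, rfl⟩ := Prod.mk.inj he
      exact hvc.elim hm fun h => hm h.1
    · rcases hvc with h | ⟨h, hb⟩
      · exact hG.2.2 v (Relation.TransGen.tail' h he)
      · exact hm ((hb.tail he).trans h)

/-! ### Splitting out-forests by the arc entering a vertex -/

open scoped Classical in
/-- The out-forests with `k` arcs in which `j` is a root. -/
noncomputable def rootedAt (W : Matrix (Fin n) (Fin n) ℝ) (k : ℕ) (j : Fin n) :
    Finset (Finset (Fin n × Fin n)) :=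
  (outForests W k).filter (fun F => ∀ e ∈ F, e.2 ≠ j)

theorem mem_outForests {W : Matrix (Fin n) (Fin n) ℝ} {k : ℕ} {F : Finset (Fin n × Fin n)} :
    F ∈ outForests W k ↔ IsOutForest W F ∧ F.card = k := by
  simp [outForests]

theorem mem_rootedAt {W : Matrix (Fin n) (Fin n) ℝ} {k : ℕ} {j : Fin n}
    {F : Finset (Fin n × Fin n)} :
    F ∈ rootedAt W k j ↔ (IsOutForest W F ∧ F.card = k) ∧ ∀ e ∈ F, e.2 ≠ j := by
  simp only [rootedAt, Finset.mem_filter, mem_outForests]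

open scoped Classical in
/-- An out-forest in which `j` is not a root arises from exactly one out-forest `G` rooted at `j`
by adding one arc `(m, j)` with `m` outside the tree of `j` in `G`. -/
theorem sum_nonroot (W : Matrix (Fin n) (Fin n) ℝ) (hW0 : ∀ i j, 0 ≤ W i j) (k : ℕ) (j : Fin n)
    (g : Finset (Fin n × Fin n) → ℝ) :
    ∑ F ∈ (outForests W (k + 1)).filter (fun F => ¬ ∀ e ∈ F, e.2 ≠ j), wt W F * g F =
      ∑ G ∈ rootedAt W k j, wt W G *
        ∑ m, if FReach G j m then 0 else W m j * g (insert (m, j) G) := by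
  simp_rw [Finset.mul_sum]
  rw [← Finset.sum_product']
  -- the pairs discarded by this filter contribute zero
  rw [← Finset.sum_filter_of_ne (p := fun x : Finset (Fin n × Fin n) × Fin n =>
    ¬ FReach x.1 j x.2 ∧ 0 < W x.2 j)]
  · symm
    refine Finset.sum_bij (fun x _ => insert (x.2, j) x.1) ?_ ?_ ?_ ?_
    · rintro ⟨G, m⟩ h
      simp only [Finset.mem_filter, Finset.mem_product, mem_rootedAt, Finset.mem_univ,
        and_true, mem_outForests] at h ⊢
      obtain ⟨⟨⟨hG, hk⟩, hj⟩, hm, hw⟩ := h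
      refine ⟨⟨hG.insert hj hm hw, ?_⟩, fun h => h _ (Finset.mem_insert_self _ _) rfl⟩
      rw [Finset.card_insert_of_notMem (fun h => hj _ h rfl), hk]
    · rintro ⟨G, m⟩ h ⟨G', m'⟩ h' heq
      simp only [Finset.mem_filter, Finset.mem_product, mem_rootedAt, Finset.mem_univ,
        and_true] at h h' heq
      have hm : (m, j) ∈ insert (m', j) G' := heq ▸ Finset.mem_insert_self _ _
      rcases Finset.mem_insert.1 hm with hm | hm
      · obtain rfl := congrArg Prod.fst hm
        have h1 : (m, j) ∉ G := fun hh => h.1.2 _ hh rfl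
        have h2 : (m, j) ∉ G' := fun hh => h'.1.2 _ hh rfl
        rw [← Finset.erase_insert h1, heq, Finset.erase_insert h2]
      · exact absurd rfl (h'.1.2 _ hm)
    · intro F hF
      simp only [Finset.mem_filter, mem_outForests] at hF
      obtain ⟨⟨hF, hk⟩, hj⟩ := hF
      push Not at hj
      obtain ⟨⟨m, j'⟩, he, rfl⟩ := hj
      have hins := Finset.insert_erase he
      refine ⟨(F.erase (m, j'), m), ?_, hins⟩
      simp only [Finset.mem_filter, Finset.mem_product, mem_rootedAt, Finset.mem_univ,
        and_true]
      refine ⟨⟨⟨hF.subset (Finset.erase_subset _ _), ?_⟩, ?_⟩, ?_, hF.1 _ he⟩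
      · rw [Finset.card_erase_of_mem he, hk]; rfl
      · rintro ⟨a, b⟩ hab rfl
        obtain ⟨hne, hab⟩ := Finset.mem_erase.1 hab
        exact hne (by rw [hF.parent_unique hab he])
      · intro hr
        refine hF.2.2 j' (Relation.TransGen.tail' (b := m) ?_ he)
        exact Relation.ReflTransGen.mono (fun _ _ h => Finset.mem_of_mem_erase h) _ _ hr
    · rintro ⟨G, m⟩ h
      simp only [Finset.mem_filter, Finset.mem_product, mem_rootedAt, Finset.mem_univ,
        and_true] at h
      have h1 : (m, j) ∉ G := fun hh => h.1.2 _ hh rfl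
      simp only [wt, Finset.prod_insert h1, if_neg h.2.1]
      ring
  · rintro ⟨G, m⟩ - h
    constructor
    · intro hr; simp [hr] at h
    · refine lt_of_le_of_ne (hW0 _ _) fun hw => h ?_
      simp only at hw
      simp [← hw]

open scoped Classical in
theorem sum_outForests_eq (W : Matrix (Fin n) (Fin n) ℝ) (hW0 : ∀ i j, 0 ≤ W i j) (k : ℕ)
    (j : Fin n) (g : Finset (Fin n × Fin n) → ℝ) :
    ∑ F ∈ outForests W (k + 1), wt W F * g F =
      ∑ F ∈ rootedAt W (k + 1) j, wt W F * g F +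
      ∑ G ∈ rootedAt W k j, wt W G *
        ∑ m, if FReach G j m then 0 else W m j * g (insert (m, j) G) := by
  rw [← sum_nonroot W hW0, rootedAt, Finset.sum_filter_add_sum_filter_not]

/-! ### The recursion for `Q_k` -/

open scoped Classical in
/-- The indicator of the event that `v` lies in the tree of `F` diverging from `i`. -/
noncomputable def treeInd (F : Finset (Fin n × Fin n)) (i v : Fin n) : ℝ :=
  if inTreeOf F i v then 1 else 0

theorem Qmat_apply (W : Matrix (Fin n) (Fin n) ℝ) (k : ℕ) (i j : Fin n) :
    Qmat W k i j = ∑ F ∈ outForests W k, wt W F * treeInd F i j := by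
  classical
  simp only [Qmat, wtSet, treeInd, mul_ite, mul_one, mul_zero, Finset.sum_filter]

theorem sigma_eq (W : Matrix (Fin n) (Fin n) ℝ) (k : ℕ) :
    sigma W k = ∑ F ∈ outForests W k, wt W F := rfl

/-- After the arc `(p, j)` is added to an out-forest with root `j`, the tree of another root `i`
gains the tree of `j` if it contains `p`, and is otherwise unchanged. -/
theorem treeInd_insert {W : Matrix (Fin n) (Fin n) ℝ} {G : Finset (Fin n × Fin n)}
    (hG : IsOutForest W G) {i j p v : Fin n} (hj : ∀ e ∈ G, e.2 ≠ j) (hij : i ≠ j)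
    [Decidable (FReach G j v)] :
    treeInd (insert (p, j) G) i v = if FReach G j v then treeInd G i p else treeInd G i v := by
  classical
  have hroot : (∀ e ∈ insert (p, j) G, e.2 ≠ i) ↔ ∀ e ∈ G, e.2 ≠ i := by
    simp [hij.symm]
  unfold treeInd inTreeOf
  rw [hroot, FReach.insert_iff]
  by_cases hi : ∀ e ∈ G, e.2 ≠ i
  · by_cases hv : FReach G j v
    · have : ¬ FReach G i v := fun h => hij (hG.root_unique hi hj h hv)
      simp [hv, this]
    · simp [hv]
  · simp only [hi, false_and, if_false, ite_self]

theorem treeInd_eq_zero_of_not_root {F : Finset (Fin n × Fin n)} {i v : Fin n}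
    (h : ¬ ∀ e ∈ F, e.2 ≠ i) : treeInd F i v = 0 :=
  if_neg fun hv => h hv.1

/-- Among the out-forests in which `j` is not a root, replacing the arc `(p, j)` by `(m, j)`
cancels the contributions to the `(i, j)` entry of `Q_k L`. -/
theorem sum_nonroot_eq_zero (W : Matrix (Fin n) (Fin n) ℝ) {k : ℕ} {i j : Fin n}
    {G : Finset (Fin n × Fin n)} (hG : G ∈ rootedAt W k j) [∀ p, Decidable (FReach G j p)] :
    (∑ p, if FReach G j p then 0 else W p j * ∑ m, W m j *
      (treeInd (insert (p, j) G) i m - treeInd (insert (p, j) G) i j)) = 0 := by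
  obtain ⟨⟨hG, -⟩, hj⟩ := mem_rootedAt.1 hG
  by_cases hij : i = j
  · subst hij
    refine Finset.sum_eq_zero fun p _ => ?_
    have : ∀ v, treeInd (insert (p, i) G) i v = 0 := fun v =>
      treeInd_eq_zero_of_not_root fun h => h _ (Finset.mem_insert_self _ _) rfl
    simp [this]
  · have hjj : FReach G j j := .refl
    simp only [treeInd_insert hG hj hij, if_pos hjj]
    set S := ∑ p, if FReach G j p then 0 else W p j * ∑ m, W m j *
      ((if FReach G j m then treeInd G i p else treeInd G i m) - treeInd G i p) with hS
    have h1 : S = ∑ p, ∑ m, if FReach G j p ∨ FReach G j m then 0 else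
        W p j * W m j * (treeInd G i m - treeInd G i p) := by
      refine Finset.sum_congr rfl fun p _ => ?_
      by_cases hp : FReach G j p
      · simp [hp]
      · simp only [hp, if_false, false_or, Finset.mul_sum]
        refine Finset.sum_congr rfl fun m _ => ?_
        split_ifs <;> ring
    have h2 : S = -S := by
      conv_lhs => rw [h1, Finset.sum_comm]
      rw [h1, ← Finset.sum_neg_distrib]
      refine Finset.sum_congr rfl fun p _ => ?_
      rw [← Finset.sum_neg_distrib]
      refine Finset.sum_congr rfl fun m _ => ?_
      simp only [or_comm (a := FReach G j m)]
      split_ifs <;> ring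
    linarith

/-- Only the out-forests in which `j` is a root contribute to the `(i, j)` entry of `-Q_k L`,
by `sum_nonroot_eq_zero`. -/
theorem Qmat_mul_neg_Lap_apply (W : Matrix (Fin n) (Fin n) ℝ) (hW0 : ∀ i j, 0 ≤ W i j)
    (hWd : ∀ i, W i i = 0) (k : ℕ) (i j : Fin n) :
    (Qmat W k * -Lap W) i j = ∑ F ∈ rootedAt W k j, wt W F *
      ∑ m, W m j * (treeInd F i m - treeInd F i j) := by
  classical
  have h1 : (Qmat W k * -Lap W) i j = ∑ m, W m j * (Qmat W k i m - Qmat W k i j) := by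
    have hL : ∀ m, (-Lap W) m j = W m j - if m = j then ∑ l, W l j else 0 := by
      intro m
      by_cases h : m = j
      · subst h
        simp [Lap, hWd]
      · simp [Lap, h]
    simp only [Matrix.mul_apply, hL, mul_sub, Finset.sum_sub_distrib, mul_ite, mul_zero,
      Finset.sum_ite_eq', Finset.mem_univ, if_true, ← Finset.sum_mul]
    rw [mul_comm (Qmat W k i j)]
    simp only [mul_comm (W _ j)]
  have h2 : (Qmat W k * -Lap W) i j = ∑ F ∈ outForests W k, wt W F *
      ∑ m, W m j * (treeInd F i m - treeInd F i j) := by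
    rw [h1]
    simp only [Qmat_apply, ← Finset.sum_sub_distrib, Finset.mul_sum]
    rw [Finset.sum_comm]
    refine Finset.sum_congr rfl fun F _ => Finset.sum_congr rfl fun m _ => by ring
  rw [h2]
  cases k with
  | zero =>
    congr 1
    ext F
    simp +contextual [mem_rootedAt, mem_outForests]
  | succ k =>
    rw [sum_outForests_eq W hW0 k j, add_eq_left]
    refine Finset.sum_eq_zero fun G hG => ?_
    rw [sum_nonroot_eq_zero W hG, mul_zero]

/-- The recursion `Q_{k+1} = σ_{k+1} I - Q_k L`. -/
theorem Qmat_succ (W : Matrix (Fin n) (Fin n) ℝ) (hW0 : ∀ i j, 0 ≤ W i j)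
    (hWd : ∀ i, W i i = 0) (k : ℕ) :
    Qmat W (k + 1) = sigma W (k + 1) • 1 + Qmat W k * -Lap W := by
  classical
  ext i j
  rw [Matrix.add_apply, Qmat_mul_neg_Lap_apply W hW0 hWd, Matrix.smul_apply, Matrix.one_apply,
    smul_eq_mul]
  by_cases hij : i = j
  · subst hij
    have hroot : ∀ k', ∀ F ∈ rootedAt W k' i, treeInd F i i = 1 := fun k' F hF =>
      if_pos ⟨(mem_rootedAt.1 hF).2, .refl⟩
    -- `σ_{k+1}` minus the diagonal entry counts the out-forests in which `i` is not a root
    have h1 : sigma W (k + 1) - Qmat W (k + 1) i i =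
        ∑ F ∈ outForests W (k + 1), wt W F * (1 - treeInd F i i) := by
      simp only [Qmat_apply, sigma_eq, ← Finset.sum_sub_distrib, mul_sub, mul_one]
    rw [sum_outForests_eq W hW0 k i, Finset.sum_eq_zero (fun F hF => by
      rw [hroot _ F hF, sub_self, mul_zero]), zero_add] at h1
    have h2 : sigma W (k + 1) - Qmat W (k + 1) i i = -∑ F ∈ rootedAt W k i, wt W F *
        ∑ m, W m i * (treeInd F i m - treeInd F i i) := by
      rw [h1, ← Finset.sum_neg_distrib]
      refine Finset.sum_congr rfl fun G hG => ?_
      rw [← mul_neg, ← Finset.sum_neg_distrib, hroot _ G hG]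
      congr 1
      refine Finset.sum_congr rfl fun m _ => ?_
      rw [treeInd_eq_zero_of_not_root (F := insert (m, i) G)
        fun h => h _ (Finset.mem_insert_self _ _) rfl]
      have hi := (mem_rootedAt.1 hG).2
      by_cases hm : FReach G i m
      · have : treeInd G i m = 1 := if_pos ⟨hi, hm⟩
        simp [hm, this]
      · have : treeInd G i m = 0 := if_neg fun h => hm h.2
        simp [hm, this]
    rw [if_pos rfl]
    linarith
  · have hroot : ∀ k', ∀ F ∈ rootedAt W k' j, treeInd F i j = 0 := fun k' F hF =>
      if_neg fun h => hij (h.2.eq_of_root (mem_rootedAt.1 hF).2)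
    rw [if_neg hij, mul_zero, zero_add, Qmat_apply, sum_outForests_eq W hW0 k j,
      Finset.sum_eq_zero (fun F hF => by rw [hroot _ F hF, mul_zero]), zero_add]
    refine Finset.sum_congr rfl fun G hG => ?_
    rw [hroot _ G hG]
    congr 1
    obtain ⟨⟨hF, -⟩, hj⟩ := mem_rootedAt.1 hG
    have hjj : FReach G j j := .refl
    refine Finset.sum_congr rfl fun m _ => ?_
    rw [treeInd_insert hF hj hij, if_pos hjj, sub_zero]
    split_ifs with hm
    · have : treeInd G i m = 0 := if_neg fun h => hij (hF.root_unique h.1 hj h.2 hm)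
      rw [this, mul_zero]
    · rfl

theorem outForests_zero (W : Matrix (Fin n) (Fin n) ℝ) : outForests W 0 = {∅} := by
  ext F
  rw [mem_outForests, Finset.card_eq_zero, Finset.mem_singleton, and_iff_right_iff_imp]
  rintro rfl
  refine ⟨by simp, by simp, fun v hv => ?_⟩
  obtain ⟨c, -, hc⟩ := Relation.TransGen.tail'_iff.1 hv
  exact absurd hc (Finset.notMem_empty _)

theorem sigma_zero (W : Matrix (Fin n) (Fin n) ℝ) : sigma W 0 = 1 := by
  simp [sigma_eq, outForests_zero, wt]

theorem Qmat_zero (W : Matrix (Fin n) (Fin n) ℝ) : Qmat W 0 = 1 := by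
  classical
  ext i j
  rw [Qmat_apply, outForests_zero, Finset.sum_singleton, Matrix.one_apply, treeInd]
  have : inTreeOf (∅ : Finset (Fin n × Fin n)) i j ↔ i = j :=
    ⟨fun h => h.2.eq_of_root (by simp), fun h => ⟨by simp, h ▸ .refl⟩⟩
  simp [this, wt]

/-- For every `k = 0, 1, 2, …`, the matrix of out-forests with `k` arcs is
a polynomial in the Laplacian matrix: `Q_k = Σ_{i=0}^{k} σ_{k−i} (−L)^i`. -/
theorem Qmat_eq_poly_in_Lap (n : ℕ) (hn : 1 < n)
    (W : Matrix (Fin n) (Fin n) ℝ)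
    (hW0 : ∀ i j, 0 ≤ W i j) (hWd : ∀ i, W i i = 0) (k : ℕ) :
    Qmat W k = ∑ i ∈ Finset.range (k + 1), sigma W (k - i) • (-Lap W) ^ i := by
  induction k with
  | zero => simp [Qmat_zero, sigma_zero]
  | succ k ih =>
    rw [Qmat_succ W hW0 hWd, ih, Finset.sum_range_succ' _ (k + 1), add_comm, Finset.sum_mul]
    simp [pow_succ]

end ForestMatrix
end

section
/- For all vertices i, j of Γ: the entry J̃_ij is nonzero if and only if i belongs to K̃ (i.e., i lies in some source knot of Γ) and j is reachable from i in Γ. -/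
/-!
The weights are positive, so `J̃ i j ≠ 0` says that some maximum out-forest has `i` as a root
and `j` in the tree of `i` (`Jtil_ne_zero_iff_exists`).

Call a set `R` of vertices *dominating* if every vertex is reachable from `R`. The root set of an
out-forest `F` is dominating and has `n - |F|` elements (`dominates_roots`,
`card_add_card_roots`); conversely every dominating set is the root set of an out-forest, obtained
by joining each vertex outside `R` to a predecessor nearer to `R` (`exists_forest`). Hence the
root sets of maximum out-forests are exactly the dominating sets of least cardinality
(`IsMaxForest.card_le`).

A vertex lies in a source knot iff it reaches everything that reaches it
(`mem_sourceKnot_iff`). If a root `i` of a maximum out-forest were reached by some `a` that it does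
not reach, then `a` would be reached from another root, so `i` could be deleted from the dominating
set, against minimality. Conversely, let `i` lie in a source knot. Any minimum dominating set has
an element reaching `i`, which can be exchanged for `i`. Let `S` be the set of vertices reachable
from `i`; by minimality `i` is the only element of the new dominating set `R` in `S`. Nothing leaves
`S`, so `R` still dominates after all arcs entering `S` from outside are dropped, and an
out-forest rooted at `R` that avoids those arcs has all of `S` in the tree of `i`.
-/

open Matrix Finset

namespace ForestMatrix

variable {n : ℕ}

/-! ### Dominating sets and root sets of out-forests -/

/-- Every vertex is reachable from some element of `R` along arcs of the relation `E`. -/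
def Dominates (E : Fin n → Fin n → Prop) (R : Finset (Fin n)) : Prop :=
  ∀ v, ∃ r ∈ R, Relation.ReflTransGen E r v

open scoped Classical in
/-- The roots of `F`: the vertices that no arc of `F` enters. -/
noncomputable def roots (F : Finset (Fin n × Fin n)) : Finset (Fin n) :=
  Finset.univ.filter (fun v => ∀ e ∈ F, e.2 ≠ v)

lemma mem_roots {F : Finset (Fin n × Fin n)} {v : Fin n} :
    v ∈ roots F ↔ ∀ e ∈ F, e.2 ≠ v := by
  simp [roots]

/-- Walking backwards along the arcs of a forest terminates at a root, by acyclicity. -/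
lemma dominates_roots {W : Matrix (Fin n) (Fin n) ℝ} {F : Finset (Fin n × Fin n)}
    (hF : IsOutForest W F) : Dominates (fun a b => (a, b) ∈ F) (roots F) := by
  have : Std.Irrefl (Relation.TransGen (fun a b : Fin n => (a, b) ∈ F)) := ⟨hF.2.2⟩
  have wf : WellFounded (Relation.TransGen (fun a b : Fin n => (a, b) ∈ F)) :=
    Finite.wellFounded_of_trans_of_irrefl _
  intro v
  induction v using wf.induction with
  | _ v ih =>
    by_cases hv : v ∈ roots F
    · exact ⟨v, hv, .refl⟩
    · rw [mem_roots] at hv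
      push Not at hv
      obtain ⟨⟨u, w⟩, he, rfl⟩ := hv
      obtain ⟨r, hr, hru⟩ := ih u (.single he)
      exact ⟨r, hr, hru.tail he⟩

/-- Indegrees are at most one, so the arcs of a forest correspond to its non-root vertices. -/
lemma card_add_card_roots {W : Matrix (Fin n) (Fin n) ℝ} {F : Finset (Fin n × Fin n)}
    (hF : IsOutForest W F) : F.card + (roots F).card = n := by
  classical
  have hinj : Set.InjOn Prod.snd (F : Set (Fin n × Fin n)) := by
    intro e he f hf hef
    refine Finset.card_le_one.1 (hF.2.1 f.2) e ?_ f ?_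
    · exact Finset.mem_filter.2 ⟨he, hef⟩
    · exact Finset.mem_filter.2 ⟨hf, rfl⟩
  have himg : F.image Prod.snd = (roots F)ᶜ := by
    ext v
    simp only [Finset.mem_image, Finset.mem_compl, mem_roots]
    push Not
    rfl
  rw [← Finset.card_image_of_injOn hinj, himg, Finset.card_compl_add_card, Fintype.card_fin]

/-- The vertices joined to `R` by an `E`-walk with exactly `k` arcs. -/
def Level (E : Fin n → Fin n → Prop) (R : Finset (Fin n)) : ℕ → Fin n → Prop
  | 0, v => v ∈ R
  | k + 1, v => ∃ u, Level E R k u ∧ E u v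

/-- A dominating set for a relation `E` is the root set of an out-forest with arcs in `E`: a
breadth-first search forest, in which each vertex outside `R` has a parent nearer to `R`. -/
lemma exists_forest {W : Matrix (Fin n) (Fin n) ℝ} {E : Fin n → Fin n → Prop}
    (hE : ∀ a b, E a b → 0 < W a b) {R : Finset (Fin n)} (hR : Dominates E R) :
    ∃ F, IsOutForest W F ∧ (∀ a b, (a, b) ∈ F → E a b) ∧ roots F = R := by
  classical
  have hL : ∀ v, ∃ k, Level E R k v := by
    intro v
    obtain ⟨r, hr, hrv⟩ := hR v
    induction hrv with
    | refl => exact ⟨0, hr⟩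
    | tail _ h ih =>
      obtain ⟨k, hk⟩ := ih
      exact ⟨k + 1, _, hk, h⟩
  let d : Fin n → ℕ := fun v => Nat.find (hL v)
  have hp : ∀ v, ∃ u, v ∉ R → E u v ∧ d u < d v := by
    intro v
    by_cases hv : v ∈ R
    · exact ⟨v, fun h => absurd hv h⟩
    · have hs : Level E R (d v) v := Nat.find_spec (hL v)
      rcases hk : d v with _ | k
      · rw [hk] at hs
        exact absurd hs hv
      · rw [hk] at hs
        obtain ⟨u, hu, huv⟩ := hs
        exact ⟨u, fun _ => ⟨huv, Nat.lt_succ_of_le (Nat.find_min' (hL u) hu)⟩⟩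
  choose p hp using hp
  let F : Finset (Fin n × Fin n) := Rᶜ.image (fun v => (p v, v))
  have hmem : ∀ a b, (a, b) ∈ F ↔ b ∉ R ∧ p b = a := by
    intro a b
    simp only [F, Finset.mem_image, Finset.mem_compl, Prod.mk.injEq]
    constructor
    · rintro ⟨v, hv, hva, rfl⟩
      exact ⟨hv, hva⟩
    · rintro ⟨hb, hba⟩
      exact ⟨b, hb, hba, rfl⟩
  have hFE : ∀ a b, (a, b) ∈ F → E a b := by
    intro a b h
    obtain ⟨hb, rfl⟩ := (hmem a b).1 h
    exact (hp b hb).1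
  refine ⟨F, ⟨fun e he => hE _ _ (hFE _ _ he), ?_, ?_⟩, hFE, ?_⟩
  · intro v
    rw [Finset.card_le_one]
    rintro ⟨a, b⟩ hab ⟨c, e⟩ hce
    obtain ⟨hab', hb⟩ := Finset.mem_filter.1 hab
    obtain ⟨hce', he⟩ := Finset.mem_filter.1 hce
    obtain rfl : b = v := hb
    obtain rfl : e = b := he
    rw [← ((hmem _ _).1 hab').2, ← ((hmem _ _).1 hce').2]
  · intro v hv
    have hlt : ∀ a b, Relation.TransGen (fun a b => (a, b) ∈ F) a b → d a < d b := by
      intro a b h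
      have hstep : ∀ a b, (a, b) ∈ F → d a < d b := by
        intro a b h
        obtain ⟨hb, rfl⟩ := (hmem a b).1 h
        exact (hp b hb).2
      induction h with
      | single h => exact hstep _ _ h
      | tail _ h ih => exact ih.trans (hstep _ _ h)
    exact lt_irrefl _ (hlt v v hv)
  · ext v
    rw [mem_roots]
    constructor
    · intro h
      by_contra hv
      exact h (p v, v) ((hmem _ _).2 ⟨hv, rfl⟩) rfl
    · rintro hv ⟨a, b⟩ he rfl
      exact ((hmem _ _).1 he).1 hv

/-! ### Maximum out-forests and minimum dominating sets -/

/-- A maximum out-forest: an out-forest with the largest possible number of arcs. -/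
def IsMaxForest (W : Matrix (Fin n) (Fin n) ℝ) (F : Finset (Fin n × Fin n)) : Prop :=
  IsOutForest W F ∧ F.card = maxArcs W

lemma IsOutForest.card_le {W : Matrix (Fin n) (Fin n) ℝ} {F : Finset (Fin n × Fin n)}
    (hF : IsOutForest W F) : F.card ≤ maxArcs W :=
  Finset.le_sup (f := Finset.card) (by simpa [allOutForests] using hF)

lemma exists_isMaxForest (W : Matrix (Fin n) (Fin n) ℝ) : ∃ F, IsMaxForest W F := by
  have hne : (allOutForests W).Nonempty := by
    refine ⟨∅, ?_⟩
    simp only [allOutForests, Finset.mem_filter, Finset.mem_univ, true_and]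
    refine ⟨by simp, by simp, ?_⟩
    intro v h
    obtain ⟨_, h, _⟩ := Relation.TransGen.head'_iff.1 h
    simp at h
  obtain ⟨F, hF, h⟩ := Finset.exists_mem_eq_sup _ hne Finset.card
  exact ⟨F, by simpa [allOutForests] using hF, h.symm⟩

/-- Maximum out-forests have root sets of least cardinality among all dominating sets. -/
lemma IsMaxForest.card_le {W : Matrix (Fin n) (Fin n) ℝ} {F : Finset (Fin n × Fin n)}
    (hF : IsMaxForest W F) {R : Finset (Fin n)}
    (hR : Dominates (fun a b => 0 < W a b) R) : (roots F).card ≤ R.card := by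
  obtain ⟨G, hG, -, rfl⟩ := exists_forest (W := W) (fun _ _ h => h) hR
  have h1 := card_add_card_roots hG
  have h2 := card_add_card_roots hF.1
  have h3 := hG.card_le
  have h4 := hF.2
  omega

lemma IsOutForest.dominates {W : Matrix (Fin n) (Fin n) ℝ} {F : Finset (Fin n × Fin n)}
    (hF : IsOutForest W F) : Dominates (fun a b => 0 < W a b) (roots F) := by
  intro v
  obtain ⟨r, hr, h⟩ := dominates_roots hF v
  exact ⟨r, hr, Relation.ReflTransGen.mono (fun _ _ he => hF.1 _ he) _ _ h⟩

/-- An element reachable from another vertex of a dominating set is redundant in it. -/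
lemma Dominates.erase {E : Fin n → Fin n → Prop} {R : Finset (Fin n)} (hR : Dominates E R)
    {r s : Fin n} (hr : r ∈ R) (hrs : r ≠ s) (h : Relation.ReflTransGen E r s) :
    Dominates E (R.erase s) := by
  intro v
  obtain ⟨t, ht, htv⟩ := hR v
  by_cases hts : t = s
  · subst hts
    exact ⟨r, Finset.mem_erase.2 ⟨hrs, hr⟩, h.trans htv⟩
  · exact ⟨t, Finset.mem_erase.2 ⟨hts, ht⟩, htv⟩

/-! ### Source knots and entries of the normalized matrix -/

/-- A vertex lies in a source knot iff it reaches every vertex that reaches it. -/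
lemma mem_sourceKnot_iff (W : Matrix (Fin n) (Fin n) ℝ) (i : Fin n) :
    (∃ K : Finset (Fin n), IsSourceKnot W K ∧ i ∈ K) ↔ ∀ a, Reach W a i → Reach W i a := by
  classical
  constructor
  · rintro ⟨K, ⟨⟨c, hc⟩, hK⟩, hi⟩ a ha
    have haK : a ∈ K := by
      induction ha using Relation.ReflTransGen.head_induction_on with
      | refl => exact hi
      | head h _ ih => exact hK _ _ ih h
    exact ((hc i).1 hi).2.trans ((hc a).1 haK).1
  · intro h
    refine ⟨Finset.univ.filter (fun j => Reach W i j ∧ Reach W j i), ⟨⟨i, ?_⟩, ?_⟩, ?_⟩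
    · simp
    · intro j k hk hjk
      simp only [Finset.mem_filter, Finset.mem_univ, true_and] at hk ⊢
      have hji : Reach W j i := Relation.ReflTransGen.head hjk hk.2
      exact ⟨h j hji, hji⟩
    · simp only [Finset.mem_filter, Finset.mem_univ, true_and]
      exact ⟨.refl, .refl⟩

lemma wt_pos {W : Matrix (Fin n) (Fin n) ℝ} {F : Finset (Fin n × Fin n)}
    (hF : IsOutForest W F) : 0 < wt W F :=
  Finset.prod_pos hF.1

lemma Jtil_ne_zero_iff_exists (W : Matrix (Fin n) (Fin n) ℝ) (i j : Fin n) :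
    Jtil W i j ≠ 0 ↔ ∃ F, IsMaxForest W F ∧ inTreeOf F i j := by
  classical
  have hmem : ∀ F, F ∈ outForests W (maxArcs W) ↔ IsMaxForest W F := by
    intro F
    simp [outForests, IsMaxForest]
  have hσ : 0 < sigma W (maxArcs W) := by
    obtain ⟨F, hF⟩ := exists_isMaxForest W
    exact Finset.sum_pos (fun G hG => wt_pos ((hmem G).1 hG).1) ⟨F, (hmem F).2 hF⟩
  have hJ : Jtil W i j = (sigma W (maxArcs W))⁻¹ * Qmat W (maxArcs W) i j := rfl
  rw [hJ, mul_ne_zero_iff, and_iff_right (inv_ne_zero hσ.ne')]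
  constructor
  · intro h
    obtain ⟨F, hF, -⟩ := Finset.exists_ne_zero_of_sum_ne_zero h
    obtain ⟨hF, ht⟩ := Finset.mem_filter.1 hF
    exact ⟨F, (hmem F).1 hF, ht⟩
  · rintro ⟨F, hF, ht⟩
    refine (Finset.sum_pos (fun G hG => ?_) ⟨F, ?_⟩).ne'
    · exact wt_pos ((hmem G).1 (Finset.mem_filter.1 hG).1).1
    · exact Finset.mem_filter.2 ⟨(hmem F).2 hF, ht⟩

/-! ### Prescribing the tree of a root -/

/-- If `i` is the only element of the dominating set `R` among the vertices it reaches, some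
out-forest rooted at `R` has every vertex reachable from `i` in the tree of `i`. -/
lemma exists_forest_tree {W : Matrix (Fin n) (Fin n) ℝ} {R : Finset (Fin n)}
    (hR : Dominates (fun a b => 0 < W a b) R) {i : Fin n} (hi : i ∈ R)
    (honly : ∀ r ∈ R, Reach W i r → r = i) :
    ∃ F, IsOutForest W F ∧ roots F = R ∧ ∀ j, Reach W i j → FReach F i j := by
  -- `E` drops the arcs that enter the set of vertices reachable from `i` from outside.
  let E : Fin n → Fin n → Prop := fun a b => 0 < W a b ∧ (Reach W i b → Reach W i a)
  have hE : Dominates E R := by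
    intro v
    by_cases hv : Reach W i v
    · refine ⟨i, hi, ?_⟩
      induction hv with
      | refl => exact .refl
      | tail hb h ih => exact ih.tail ⟨h, fun _ => hb⟩
    · obtain ⟨r, hr, hrv⟩ := hR v
      refine ⟨r, hr, ?_⟩
      induction hrv with
      | refl => exact .refl
      | tail _ h ih =>
        exact (ih fun hb => hv (hb.tail h)).tail ⟨h, fun hc => absurd hc hv⟩
  obtain ⟨F, hF, hFE, hroots⟩ := exists_forest (fun _ _ h => h.1) hE
  refine ⟨F, hF, hroots, fun j hj => ?_⟩
  obtain ⟨r, hr, hrj⟩ := dominates_roots hF j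
  have hir : Reach W i r := by
    clear hr
    induction hrj using Relation.ReflTransGen.head_induction_on with
    | refl => exact hj
    | head h _ ih => exact (hFE _ _ h).2 ih
  rw [honly r (hroots ▸ hr) hir] at hrj
  exact hrj

/-- For all vertices `i, j`: the entry `J̃_ij` is nonzero iff `i` lies in
some source knot of `Γ` and `j` is reachable from `i` in `Γ`. -/
theorem Jtil_ne_zero_iff (n : ℕ) (hn : 1 < n)
    (W : Matrix (Fin n) (Fin n) ℝ)
    (hW0 : ∀ i j, 0 ≤ W i j) (hWd : ∀ i, W i i = 0) (i j : Fin n) :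
    Jtil W i j ≠ 0 ↔
      ((∃ K : Finset (Fin n), IsSourceKnot W K ∧ i ∈ K) ∧ Reach W i j) := by
  classical
  rw [Jtil_ne_zero_iff_exists, mem_sourceKnot_iff]
  constructor
  · rintro ⟨F, hF, hroot, hij⟩
    refine ⟨fun a ha => ?_, Relation.ReflTransGen.mono (fun _ _ he => hF.1.1 _ he) _ _ hij⟩
    by_contra hia
    -- The root above `a` differs from `i`, which makes `i` redundant among the roots.
    obtain ⟨r, hr, hra⟩ := hF.1.dominates a
    have hri : r ≠ i := by
      rintro rfl
      exact hia hra
    have h1 := hF.card_le (hF.1.dominates.erase hr hri (hra.trans ha))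
    have h2 := Finset.card_erase_lt_of_mem (mem_roots.2 hroot)
    omega
  · rintro ⟨hi, hij⟩
    obtain ⟨F₀, hF₀⟩ := exists_isMaxForest W
    obtain ⟨r, hr, hri⟩ := hF₀.1.dominates i
    have hir := hi r hri
    -- Exchange the root `r` above `i` for `i` itself.
    let R := insert i ((roots F₀).erase r)
    have hR : Dominates (fun a b => 0 < W a b) R := by
      intro v
      obtain ⟨t, ht, htv⟩ := hF₀.1.dominates v
      by_cases htr : t = r
      · subst htr
        exact ⟨i, Finset.mem_insert_self _ _, hir.trans htv⟩
      · exact ⟨t, Finset.mem_insert_of_mem (Finset.mem_erase.2 ⟨htr, ht⟩), htv⟩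
    have hcard : R.card ≤ (roots F₀).card := by
      have h1 := Finset.card_insert_le i ((roots F₀).erase r)
      have h2 := Finset.card_erase_lt_of_mem hr
      have h3 : R.card = (insert i ((roots F₀).erase r)).card := rfl
      omega
    have hiR : i ∈ R := Finset.mem_insert_self _ _
    have honly : ∀ s ∈ R, Reach W i s → s = i := by
      intro s hs his
      by_contra hsi
      have h1 := hF₀.card_le (hR.erase hiR (Ne.symm hsi) his)
      have h2 := Finset.card_erase_lt_of_mem hs
      omega
    obtain ⟨F, hF, hroots, htree⟩ := exists_forest_tree hR hiR honly
    refine ⟨F, ⟨hF, ?_⟩, mem_roots.1 (hroots ▸ hiR), htree j hij⟩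
    have h1 := card_add_card_roots hF
    have h2 := card_add_card_roots hF₀.1
    have h3 := hF.card_le
    have h4 := hF₀.2
    rw [hroots] at h1
    omega

end ForestMatrix
end

section
/- For every source knot K of Γ, the diagonal entries of J̃ indexed by K sum to one: Σ_{k∈K} J̃_kk = 1. In particular, if k is a source of Γ (a vertex of indegree 0), then J̃_kk = 1. -/
/-!
Every maximum out-forest has exactly one root in a source knot `K`; granted this, exchanging the
two summations in `∑ k ∈ K, (Q_{n-d'})_kk` gives `σ_{n-d'}`, which is positive.

* At least one root: arcs ending in `K` start in `K`, so a vertex of `K` that is minimal for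
  the ancestor relation of the forest has no parent at all (`exists_root_mem`).
* At most one root: `K` is strongly connected, so a breadth-first search from a vertex `r` of `K`
  gives a tree spanning `K` (`exists_bfs`). Replacing the arcs of the forest `F` that end in `K`
  by the `|K| - 1` arcs of that tree gives again an out-forest, since no cycle can cross the
  boundary of `K`. If `F` had two roots in `K`, it would have at most `|K| - 2` arcs ending in `K`,
  so the new forest would have more arcs than `F` (`root_unique`).

The statement on sources is the case `K = {k}`.
-/

open Matrix Finset

namespace ForestMatrix

variable {n : ℕ}

/-- There is a walk with `m` arcs from `r` to `v` in the digraph with weight matrix `W`. -/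
def HasWalk (W : Matrix (Fin n) (Fin n) ℝ) (r : Fin n) : ℕ → Fin n → Prop
  | 0, v => v = r
  | m + 1, v => ∃ u, HasWalk W r m u ∧ 0 < W u v

lemma Reach.exists_hasWalk {W : Matrix (Fin n) (Fin n) ℝ} {r v : Fin n} (h : Reach W r v) :
    ∃ m, HasWalk W r m v := by
  induction h with
  | refl => exact ⟨0, rfl⟩
  | tail _ hbc ih =>
    obtain ⟨m, hm⟩ := ih
    exact ⟨m + 1, _, hm, hbc⟩

/-- Breadth-first search from `r`: `d` is the distance from `r`, and `p` chooses a parent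
at smaller distance. -/
lemma exists_bfs (W : Matrix (Fin n) (Fin n) ℝ) (r : Fin n) :
    ∃ (d : Fin n → ℕ) (p : Fin n → Fin n),
      ∀ v, Reach W r v → v ≠ r → 0 < W (p v) v ∧ d (p v) < d v := by
  classical
  -- Junk distance `0` for unreachable vertices.
  let d : Fin n → ℕ := fun v => if h : ∃ m, HasWalk W r m v then Nat.find h else 0
  have hd : ∀ v m, HasWalk W r m v → d v ≤ m := by
    intro v m hm
    have h : ∃ m, HasWalk W r m v := ⟨m, hm⟩
    simp only [d, dif_pos h]
    exact Nat.find_min' h hm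
  have key : ∀ v, ∃ u, Reach W r v → v ≠ r → 0 < W u v ∧ d u < d v := by
    intro v
    by_cases hv : Reach W r v ∧ v ≠ r
    · have h := hv.1.exists_hasWalk
      have hs : HasWalk W r (d v) v := by
        simp only [d, dif_pos h]
        exact Nat.find_spec h
      cases hm : d v with
      | zero => rw [hm] at hs; exact absurd hs hv.2
      | succ m =>
        rw [hm] at hs
        obtain ⟨u, hu, huv⟩ := hs
        exact ⟨u, fun _ _ => ⟨huv, Nat.lt_succ_of_le (hd u m hu)⟩⟩
    · exact ⟨v, fun h1 h2 => absurd ⟨h1, h2⟩ hv⟩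
  choose p hp using key
  exact ⟨d, p, hp⟩

lemma IsSourceKnot.reach {W : Matrix (Fin n) (Fin n) ℝ} {K : Finset (Fin n)}
    (hK : IsSourceKnot W K) {r v : Fin n} (hr : r ∈ K) (hv : v ∈ K) : Reach W r v := by
  obtain ⟨⟨i, hi⟩, -⟩ := hK
  exact Relation.ReflTransGen.trans ((hi r).1 hr).2 ((hi v).1 hv).1

lemma IsSourceKnot.nonempty {W : Matrix (Fin n) (Fin n) ℝ} {K : Finset (Fin n)}
    (hK : IsSourceKnot W K) : K.Nonempty := by
  obtain ⟨⟨i, hi⟩, -⟩ := hK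
  exact ⟨i, (hi i).2 ⟨Relation.ReflTransGen.refl, Relation.ReflTransGen.refl⟩⟩

/-- The indegree bound of an out-forest, read as uniqueness of the arc entering a vertex. -/
lemma IsOutForest.arc_eq {W : Matrix (Fin n) (Fin n) ℝ} {F : Finset (Fin n × Fin n)}
    (hF : IsOutForest W F) {e f : Fin n × Fin n} (he : e ∈ F) (hf : f ∈ F) (h : e.2 = f.2) :
    e = f :=
  Finset.card_le_one.1 (hF.2.1 f.2) e (by simp [he, h]) f (by simp [hf])

lemma exists_root_mem {W : Matrix (Fin n) (Fin n) ℝ} {K : Finset (Fin n)}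
    (hK : IsSourceKnot W K) {F : Finset (Fin n × Fin n)} (hF : IsOutForest W F) :
    ∃ k ∈ K, ∀ e ∈ F, e.2 ≠ k := by
  let R : Fin n → Fin n → Prop := Relation.TransGen (fun a b => (a, b) ∈ F)
  have : IsTrans (Fin n) R := ⟨fun _ _ _ h1 h2 => Relation.TransGen.trans h1 h2⟩
  have : Std.Irrefl R := ⟨hF.2.2⟩
  have wf : WellFounded R := Finite.wellFounded_of_trans_of_irrefl R
  obtain ⟨k, hk, hmin⟩ := wf.has_min (K : Set (Fin n)) hK.nonempty
  refine ⟨k, hk, ?_⟩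
  rintro ⟨a, b⟩ he rfl
  exact hmin a (hK.2 a b hk (hF.1 _ he)) (Relation.TransGen.single he)

/-- A maximum out-forest has at most one root in a source knot: otherwise the arcs ending in the
knot could be exchanged for the more numerous arcs of a spanning tree of the knot. -/
lemma root_unique {W : Matrix (Fin n) (Fin n) ℝ} {K : Finset (Fin n)}
    (hK : IsSourceKnot W K) {F : Finset (Fin n × Fin n)} (hF : IsOutForest W F)
    (hmax : F.card = maxArcs W) {r s : Fin n} (hr : r ∈ K) (hs : s ∈ K)
    (hrF : ∀ e ∈ F, e.2 ≠ r) (hsF : ∀ e ∈ F, e.2 ≠ s) : r = s := by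
  classical
  by_contra hrs
  obtain ⟨d, p, hp⟩ := exists_bfs W r
  have hpK : ∀ v ∈ K.erase r, 0 < W (p v) v ∧ d (p v) < d v := fun v hv =>
    hp v (hK.reach hr (Finset.mem_of_mem_erase hv)) (Finset.ne_of_mem_erase hv)
  -- `T` is the breadth-first tree of `K` from `r`, `A` the part of `F` to be kept.
  let T : Finset (Fin n × Fin n) := (K.erase r).image (fun v => (p v, v))
  let A : Finset (Fin n × Fin n) := F.filter (fun e => e.2 ∉ K)
  have hT : ∀ a b, (a, b) ∈ T → b ∈ K.erase r ∧ a = p b := by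
    intro a b h
    obtain ⟨v, hv, he⟩ := Finset.mem_image.1 h
    obtain ⟨rfl, rfl⟩ := Prod.mk.inj he
    exact ⟨hv, rfl⟩
  have hA : ∀ a b, (a, b) ∈ A → (a, b) ∈ F ∧ b ∉ K := fun a b h => Finset.mem_filter.1 h
  have hpos : ∀ e ∈ A ∪ T, 0 < W e.1 e.2 := by
    rintro ⟨a, b⟩ he
    rcases Finset.mem_union.1 he with h | h
    · exact hF.1 _ (hA a b h).1
    · obtain ⟨hb, rfl⟩ := hT a b h
      exact (hpK b hb).1
  -- Paths of the new forest that end in `K` stay in `K` and strictly increase `d`; paths that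
  -- start outside `K` stay outside, hence are paths of `F`. Neither kind can close up.
  have hin : ∀ a b, Relation.TransGen (fun a b => (a, b) ∈ A ∪ T) a b →
      b ∈ K → a ∈ K ∧ d a < d b := by
    have step : ∀ a b, (a, b) ∈ A ∪ T → b ∈ K → a ∈ K ∧ d a < d b := by
      intro a b he hb
      refine ⟨hK.2 a b hb (hpos _ he), ?_⟩
      rcases Finset.mem_union.1 he with h | h
      · exact absurd hb (hA a b h).2
      · obtain ⟨hb, rfl⟩ := hT a b h
        exact (hpK b hb).2
    intro a b h
    induction h with
    | single h => exact step _ _ h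
    | tail _ h ih =>
      intro hc
      obtain ⟨hb, hlt⟩ := step _ _ h hc
      exact ⟨(ih hb).1, (ih hb).2.trans hlt⟩
  have hout : ∀ a b, Relation.TransGen (fun a b => (a, b) ∈ A ∪ T) a b →
      a ∉ K → b ∉ K ∧ Relation.TransGen (fun a b => (a, b) ∈ F) a b := by
    have step : ∀ a b, (a, b) ∈ A ∪ T → a ∉ K → b ∉ K ∧ (a, b) ∈ F := by
      intro a b he ha
      have hb : b ∉ K := fun hb => ha (hK.2 a b hb (hpos _ he))
      rcases Finset.mem_union.1 he with h | h
      · exact ⟨hb, (hA a b h).1⟩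
      · exact absurd (Finset.mem_of_mem_erase (hT a b h).1) hb
    intro a b h ha
    induction h with
    | single h => exact ⟨(step _ _ h ha).1, Relation.TransGen.single (step _ _ h ha).2⟩
    | tail _ h ih =>
      obtain ⟨hc, hF'⟩ := step _ _ h ih.1
      exact ⟨hc, ih.2.tail hF'⟩
  have hforest : IsOutForest W (A ∪ T) := by
    refine ⟨hpos, fun v => Finset.card_le_one.2 ?_, fun v hv => ?_⟩
    · rintro ⟨a, b⟩ hm ⟨a', b'⟩ hm'
      obtain ⟨he, h1⟩ := Finset.mem_filter.1 hm
      obtain ⟨he', h2⟩ := Finset.mem_filter.1 hm'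
      obtain rfl : b' = b := h2.trans h1.symm
      rcases Finset.mem_union.1 he with h | h <;> rcases Finset.mem_union.1 he' with h' | h'
      · exact hF.arc_eq (hA _ _ h).1 (hA _ _ h').1 rfl
      · exact absurd (Finset.mem_of_mem_erase (hT _ _ h').1) (hA _ _ h).2
      · exact absurd (Finset.mem_of_mem_erase (hT _ _ h).1) (hA _ _ h').2
      · rw [(hT _ _ h).2, (hT _ _ h').2]
    · by_cases hvK : v ∈ K
      · exact lt_irrefl _ (hin v v hv hvK).2
      · exact hF.2.2 v (hout v v hv hvK).2
  have hle : (A ∪ T).card ≤ maxArcs W :=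
    Finset.le_sup (f := Finset.card) (Finset.mem_filter.2 ⟨Finset.mem_univ _, hforest⟩)
  have hdisj : Disjoint A T := by
    rw [Finset.disjoint_left]
    rintro ⟨a, b⟩ h h'
    exact (hA a b h).2 (Finset.mem_of_mem_erase (hT a b h').1)
  have hTcard : T.card = (K.erase r).card :=
    Finset.card_image_of_injective _ (fun a b h => (Prod.mk.inj h).2)
  have hB : (F.filter (fun e => e.2 ∈ K)).card ≤ ((K.erase r).erase s).card := by
    refine Finset.card_le_card_of_injOn Prod.snd ?_ ?_
    · intro e he
      obtain ⟨he, heK⟩ := Finset.mem_filter.1 he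
      exact Finset.mem_erase.2 ⟨hsF e he, Finset.mem_erase.2 ⟨hrF e he, heK⟩⟩
    · intro e he f hf h
      exact hF.arc_eq (Finset.mem_filter.1 he).1 (Finset.mem_filter.1 hf).1 h
  have hsplit : (F.filter (fun e => e.2 ∈ K)).card + A.card = F.card :=
    Finset.card_filter_add_card_filter_not _
  have hs' : ((K.erase r).erase s).card + 1 = (K.erase r).card :=
    Finset.card_erase_add_one (Finset.mem_erase.2 ⟨Ne.symm hrs, hs⟩)
  rw [Finset.card_union_of_disjoint hdisj] at hle
  omega

lemma sigma_maxArcs_pos (W : Matrix (Fin n) (Fin n) ℝ) : 0 < sigma W (maxArcs W) := by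
  classical
  have hempty : IsOutForest W ∅ := by
    refine ⟨by simp, by simp, fun v hv => ?_⟩
    obtain ⟨_, h, _⟩ := Relation.TransGen.head'_iff.1 hv
    exact absurd h (Finset.notMem_empty _)
  have hne : (allOutForests W).Nonempty :=
    ⟨∅, Finset.mem_filter.2 ⟨Finset.mem_univ _, hempty⟩⟩
  obtain ⟨F, hF, hc⟩ := Finset.exists_mem_eq_sup _ hne Finset.card
  refine Finset.sum_pos (fun G hG => Finset.prod_pos (Finset.mem_filter.1 hG).2.1.1) ⟨F, ?_⟩
  exact Finset.mem_filter.2 ⟨Finset.mem_univ _, (Finset.mem_filter.1 hF).2, hc.symm⟩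

lemma sum_Qmat_diag {W : Matrix (Fin n) (Fin n) ℝ} {K : Finset (Fin n)}
    (hK : IsSourceKnot W K) :
    ∑ k ∈ K, Qmat W (maxArcs W) k k = sigma W (maxArcs W) := by
  classical
  simp only [Qmat, sigma, wtSet, Finset.sum_filter]
  rw [Finset.sum_comm]
  refine Finset.sum_congr rfl fun F hF => ?_
  obtain ⟨-, hF, hc⟩ := Finset.mem_filter.1 hF
  obtain ⟨k, hk, hroot⟩ := exists_root_mem hK hF
  rw [Finset.sum_eq_single_of_mem k hk, if_pos ⟨hroot, Relation.ReflTransGen.refl⟩]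
  intro j hj hjk
  exact if_neg fun h => hjk (root_unique hK hF hc hj hk h.1 hroot)

lemma isSourceKnot_singleton {W : Matrix (Fin n) (Fin n) ℝ} {k : Fin n}
    (hk : ∀ j, W j k = 0) : IsSourceKnot W {k} := by
  refine ⟨⟨k, fun j => ?_⟩, fun j v hv hpos => ?_⟩
  · rw [Finset.mem_singleton]
    constructor
    · rintro rfl
      exact ⟨Relation.ReflTransGen.refl, Relation.ReflTransGen.refl⟩
    · rintro ⟨-, h⟩
      rcases Relation.ReflTransGen.cases_tail h with h | ⟨c, -, hc⟩
      · exact h.symm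
      · exact absurd hc (by simp [hk c])
  · rw [Finset.mem_singleton] at hv
    subst hv
    exact absurd hpos (by simp [hk j])

/-- For every source knot `K` of `Γ`, `Σ_{k∈K} J̃_kk = 1`. In particular,
if `k` is a source of `Γ` (a vertex of indegree 0), then `J̃_kk = 1`. -/
theorem Jtil_diag_sum_over_source_knot (n : ℕ) (hn : 1 < n)
    (W : Matrix (Fin n) (Fin n) ℝ)
    (hW0 : ∀ i j, 0 ≤ W i j) (hWd : ∀ i, W i i = 0) :
    (∀ K : Finset (Fin n), IsSourceKnot W K → ∑ k ∈ K, Jtil W k k = 1) ∧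
    (∀ k : Fin n, (∀ j, W j k = 0) → Jtil W k k = 1) := by
  have main : ∀ K : Finset (Fin n), IsSourceKnot W K → ∑ k ∈ K, Jtil W k k = 1 := by
    intro K hK
    simp only [Jtil, Matrix.smul_apply, smul_eq_mul]
    rw [← Finset.mul_sum, sum_Qmat_diag hK]
    exact inv_mul_cancel₀ (sigma_maxArcs_pos W).ne'
  refine ⟨main, fun k hk => ?_⟩
  simpa using main {k} (isSourceKnot_singleton hk)

end ForestMatrix
end

section
/- Let K be a source knot of Γ and k₁, k₂ ∈ K. Then the rows k₁ and k₂ of J̃ are proportional: J̃_{k₂•} = (w(𝒯^{k₂})/w(𝒯^{k₁})) · J̃_{k₁•}, i.e., J̃_{k₂ j} · w(𝒯^{k₁}) = J̃_{k₁ j} · w(𝒯^{k₂}) for every vertex j. -/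
/-!
No arc enters a source knot `K`, so an out-forest splits into its arcs with head in `K`, which
lie inside `K`, and its arcs with head outside `K`; conversely, an out-forest inside `K` and
one without arcs into `K` always glue to an out-forest (`IsOutForest.union`). As `K` is
strongly connected, each of its vertices is the root of a spanning tree of `K`
(`knotTrees_nonempty`), so by maximality the inner part of a maximum out-forest with root
`k ∈ K` is itself a spanning tree of `K` diverging from `k` (`filter_mem_knotTrees`). The
condition that `j` lies in the tree of `k` then only says that the outer part reaches `j` from
some vertex of `K`, a condition independent of `k`. Hence the `(k, j)` entry of the matrix of
maximum out-forests equals `w(𝒯^k)` times a factor depending on `K` and `j` alone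
(`Qmat_maxArcs_eq`), and rows of the same knot are proportional.
-/

open Matrix Finset

namespace ForestMatrix

variable {n : ℕ}

open scoped Classical in
/-- `𝒯^k`: the set of spanning diverging trees of the restriction `Γ_K` of `Γ` to `K`
that diverge from `k` (all arcs lie within `K`, and every vertex of `K` is reachable
from `k`). -/
noncomputable def knotTrees (W : Matrix (Fin n) (Fin n) ℝ) (K : Finset (Fin n))
    (k : Fin n) : Finset (Finset (Fin n × Fin n)) :=
  Finset.univ.filter (fun F => IsOutForest W F ∧ (∀ e ∈ F, e.1 ∈ K ∧ e.2 ∈ K) ∧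
    ∀ j ∈ K, FReach F k j)

open scoped Classical in
/-- `𝒯`: the set of all spanning diverging trees of the restriction `Γ_K`. -/
noncomputable def knotTreesAll (W : Matrix (Fin n) (Fin n) ℝ) (K : Finset (Fin n)) :
    Finset (Finset (Fin n × Fin n)) :=
  Finset.univ.filter (fun F => IsOutForest W F ∧ (∀ e ∈ F, e.1 ∈ K ∧ e.2 ∈ K) ∧
    ∃ k ∈ K, ∀ j ∈ K, FReach F k j)

/-- The weight matrix of `Γ_{−K}`: the spanning subgraph of `Γ` obtained by deleting all
arcs of `Γ_K` (arcs with both endpoints in `K`). -/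
noncomputable def Wminus (W : Matrix (Fin n) (Fin n) ℝ) (K : Finset (Fin n)) :
    Matrix (Fin n) (Fin n) ℝ :=
  fun i j => if i ∈ K ∧ j ∈ K then 0 else W i j
section Aux

variable {W : Matrix (Fin n) (Fin n) ℝ} {K : Finset (Fin n)}
  {F F' T R : Finset (Fin n × Fin n)}

/-! ### Out-forests: subforests and unions -/

lemma IsOutForest.subset_s12 (h : IsOutForest W F) (hs : F' ⊆ F) : IsOutForest W F' := by
  refine ⟨fun e he => h.1 e (hs he), fun v => ?_, fun v hv => ?_⟩
  · exact (Finset.card_le_card (Finset.filter_subset_filter _ hs)).trans (h.2.1 v)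
  · exact h.2.2 v (Relation.TransGen.mono (fun a b hab => hs hab) _ _ hv)

lemma IsOutForest.injOn_snd (h : IsOutForest W F) :
    Set.InjOn Prod.snd (F : Set (Fin n × Fin n)) := by
  intro e he e' he' hee
  refine Finset.card_le_one.1 (h.2.1 e'.2) e ?_ e' ?_
  · exact Finset.mem_filter.2 ⟨he, hee⟩
  · exact Finset.mem_filter.2 ⟨he', rfl⟩

/-- A walk in `T ∪ R` that ends in `K` never leaves `K`, hence uses arcs of `T` only. -/
lemma transGen_left (hT : ∀ e ∈ T, e.1 ∈ K ∧ e.2 ∈ K) (hR : ∀ e ∈ R, e.2 ∉ K) {a b : Fin n}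
    (h : Relation.TransGen (fun a b => (a, b) ∈ T ∪ R) a b) (hb : b ∈ K) :
    Relation.TransGen (fun a b => (a, b) ∈ T) a b := by
  induction h with
  | single h =>
    rcases Finset.mem_union.1 h with h | h
    · exact .single h
    · exact absurd hb (hR _ h)
  | tail _ h ih =>
    rcases Finset.mem_union.1 h with h | h
    · exact .tail (ih (hT _ h).1) h
    · exact absurd hb (hR _ h)

/-- A walk in `T ∪ R` that starts outside `K` never enters `K`, hence uses arcs of `R` only. -/
lemma transGen_right (hT : ∀ e ∈ T, e.1 ∈ K ∧ e.2 ∈ K) (hR : ∀ e ∈ R, e.2 ∉ K) {a b : Fin n}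
    (h : Relation.TransGen (fun a b => (a, b) ∈ T ∪ R) a b) (ha : a ∉ K) :
    Relation.TransGen (fun a b => (a, b) ∈ R) a b ∧ b ∉ K := by
  induction h with
  | single h =>
    rcases Finset.mem_union.1 h with h | h
    · exact absurd (hT _ h).1 ha
    · exact ⟨.single h, hR _ h⟩
  | tail _ h ih =>
    rcases Finset.mem_union.1 h with h | h
    · exact absurd (hT _ h).1 ih.2
    · exact ⟨.tail ih.1 h, hR _ h⟩

/-- Gluing an out-forest inside `K` to an out-forest all of whose arcs have their heads
outside `K` gives an out-forest. -/
lemma IsOutForest.union (h : IsOutForest W T) (h' : IsOutForest W R)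
    (hT : ∀ e ∈ T, e.1 ∈ K ∧ e.2 ∈ K) (hR : ∀ e ∈ R, e.2 ∉ K) : IsOutForest W (T ∪ R) := by
  refine ⟨fun e he => ?_, fun v => Finset.card_le_one.2 ?_, fun v hv => ?_⟩
  · rcases Finset.mem_union.1 he with he | he
    · exact h.1 e he
    · exact h'.1 e he
  · intro e hev e' hev'
    obtain ⟨he, rfl⟩ := Finset.mem_filter.1 hev
    obtain ⟨he', hee⟩ := Finset.mem_filter.1 hev'
    rcases Finset.mem_union.1 he with he | he <;> rcases Finset.mem_union.1 he' with he' | he'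
    · exact h.injOn_snd he he' hee.symm
    · exact absurd (hee ▸ (hT e he).2) (hR e' he')
    · exact absurd (hee ▸ (hT e' he').2) (hR e he)
    · exact h'.injOn_snd he he' hee.symm
  · by_cases hvK : v ∈ K
    · exact h.2.2 v (transGen_left hT hR hv hvK)
    · exact h'.2.2 v (transGen_right hT hR hv hvK).1

lemma disjoint_of_heads (hT : ∀ e ∈ T, e.1 ∈ K ∧ e.2 ∈ K) (hR : ∀ e ∈ R, e.2 ∉ K) :
    Disjoint T R :=
  Finset.disjoint_left.2 fun e he he' => hR e he' (hT e he).2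

/-- In an out-forest where every vertex of `K` other than `k` has its parent in `K`, climbing
from parent to parent ends at `k`, because there are no cycles. -/
lemma IsOutForest.reach_of_parents (h : IsOutForest W F) {k : Fin n}
    (hp : ∀ v ∈ K, v ≠ k → ∃ p ∈ K, (p, v) ∈ F) : ∀ v ∈ K, FReach F k v := by
  have : Std.Irrefl (Relation.TransGen (fun a b : Fin n => (a, b) ∈ F)) := ⟨h.2.2⟩
  have hwf : WellFounded (Relation.TransGen (fun a b : Fin n => (a, b) ∈ F)) :=
    Finite.wellFounded_of_trans_of_irrefl _
  intro v
  induction v using hwf.induction with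
  | _ v ih =>
    intro hv
    by_cases hvk : v = k
    · subst hvk; exact .refl
    · obtain ⟨p, hpK, hpv⟩ := hp v hv hvk
      exact Relation.ReflTransGen.tail (ih p (.single hpv) hpK) hpv

/-! ### Spanning trees of a source knot -/

lemma mem_knotTrees {k : Fin n} : T ∈ knotTrees W K k ↔
    IsOutForest W T ∧ (∀ e ∈ T, e.1 ∈ K ∧ e.2 ∈ K) ∧ ∀ j ∈ K, FReach T k j := by
  simp [knotTrees]

lemma knotTrees_root {k : Fin n} (hT : T ∈ knotTrees W K k) : ∀ e ∈ T, e.2 ≠ k := by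
  rw [mem_knotTrees] at hT
  rintro ⟨a, b⟩ he rfl
  exact hT.1.2.2 b (Relation.TransGen.tail' (hT.2.2 a (hT.2.1 _ he).1) he)

lemma knotTrees_image {k : Fin n} (hT : T ∈ knotTrees W K k) :
    T.image Prod.snd = K.erase k := by
  have hr := knotTrees_root hT
  rw [mem_knotTrees] at hT
  ext v
  simp only [Finset.mem_image, Finset.mem_erase]
  constructor
  · rintro ⟨e, he, rfl⟩
    exact ⟨hr e he, (hT.2.1 e he).2⟩
  · rintro ⟨hvk, hv⟩
    rcases Relation.ReflTransGen.cases_tail (hT.2.2 v hv) with h | ⟨c, -, hc⟩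
    · exact absurd h hvk
    · exact ⟨_, hc, rfl⟩

lemma knotTrees_card {k : Fin n} (hT : T ∈ knotTrees W K k) :
    T.card = (K.erase k).card := by
  rw [← knotTrees_image hT, Finset.card_image_of_injOn (mem_knotTrees.1 hT).1.injOn_snd]

open scoped Classical in
/-- Every vertex `k` of a source knot is the root of a spanning tree of the knot: a largest
tree rooted at `k` inside `K` spans `K`, since otherwise an arc leaving its vertex set could
be added. -/
lemma knotTrees_nonempty (hK : IsSourceKnot W K) {k : Fin n} (hk : k ∈ K) :
    (knotTrees W K k).Nonempty := by
  set C : Finset (Finset (Fin n × Fin n)) := Finset.univ.filter fun T =>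
    IsOutForest W T ∧ (∀ e ∈ T, e.1 ∈ K ∧ e.2 ∈ K) ∧ ∀ e ∈ T, FReach T k e.1 with hC
  have hne : C.Nonempty := by
    refine ⟨∅, ?_⟩
    simp only [hC, Finset.mem_filter, Finset.mem_univ, true_and]
    refine ⟨⟨by simp, by simp, fun v hv => ?_⟩, by simp, by simp⟩
    obtain ⟨c, hc, -⟩ := Relation.TransGen.head'_iff.1 hv
    simp at hc
  obtain ⟨T, hTC, hmax⟩ := Finset.exists_max_image C Finset.card hne
  obtain ⟨hT, hTK, hTr⟩ := (Finset.mem_filter.1 hTC).2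
  refine ⟨T, mem_knotTrees.2 ⟨hT, hTK, fun j hj => ?_⟩⟩
  have hkj : Reach W k j := by
    obtain ⟨i, hi⟩ := hK.1
    exact ((hi k).1 hk).2.trans ((hi j).1 hj).1
  induction hkj with
  | refl => exact .refl
  | @tail a b _ hab ih =>
    have haK := hK.2 a b hj hab
    have ha := ih haK
    by_contra hb
    -- `S` is the vertex set of the tree; the arc `(a, b)` leaves it.
    set S : Finset (Fin n) := Finset.univ.filter fun v => FReach T k v with hS
    have hTS : ∀ e ∈ T, e.1 ∈ S ∧ e.2 ∈ S := fun e he => by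
      have h1 := hTr e he
      have h2 : FReach T k e.2 := Relation.ReflTransGen.tail h1 he
      exact ⟨by simpa [hS] using h1, by simpa [hS] using h2⟩
    have hRS : ∀ e ∈ ({(a, b)} : Finset (Fin n × Fin n)), e.2 ∉ S := by
      simpa [hS] using hb
    have hR : IsOutForest W ({(a, b)} : Finset (Fin n × Fin n)) := by
      refine ⟨by simpa using hab, fun v => ?_, fun v hv => ?_⟩
      · exact (Finset.card_filter_le _ _).trans (by simp)
      · obtain ⟨c, hc, -⟩ := Relation.TransGen.head'_iff.1 hv
        obtain ⟨d, -, hd⟩ := Relation.TransGen.tail'_iff.1 hv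
        simp only [Finset.mem_singleton, Prod.mk.injEq] at hc hd
        exact hb ((hc.1.symm.trans hd.2) ▸ ha)
    have hmono : ∀ v, FReach T k v → FReach (T ∪ {(a, b)}) k v := fun v hv =>
      Relation.ReflTransGen.mono (fun x y hxy => Finset.mem_union_left _ hxy) _ _ hv
    have hmem : T ∪ {(a, b)} ∈ C := by
      refine Finset.mem_filter.2 ⟨Finset.mem_univ _, hT.union hR hTS hRS, ?_, ?_⟩
      · intro e he
        rcases Finset.mem_union.1 he with he | he
        · exact hTK e he
        · rw [Finset.mem_singleton.1 he]; exact ⟨haK, hj⟩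
      · intro e he
        rcases Finset.mem_union.1 he with he | he
        · exact hmono _ (hTr e he)
        · rw [Finset.mem_singleton.1 he]; exact hmono _ ha
    have hle := hmax _ hmem
    rw [Finset.card_union_of_disjoint (disjoint_of_heads hTS hRS), Finset.card_singleton] at hle
    omega

lemma knotTrees_wt_pos (hK : IsSourceKnot W K) {k : Fin n} (hk : k ∈ K) :
    0 < wtSet W (knotTrees W K k) :=
  Finset.sum_pos (fun _ hT => Finset.prod_pos fun e he => (mem_knotTrees.1 hT).1.1 e he)
    (knotTrees_nonempty hK hk)

/-! ### Factorization of the maximum out-forests -/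

open scoped Classical in
/-- The parts outside the knot `K` of the maximum out-forests in which `j` lies in a tree
rooted in `K`: out-forests `R` without arcs into `K`, with as many arcs as are missing from a
spanning tree of `K` to a maximum out-forest, and in which `j` is reachable from `K`. -/
noncomputable def outerForests (W : Matrix (Fin n) (Fin n) ℝ) (K : Finset (Fin n))
    (j : Fin n) : Finset (Finset (Fin n × Fin n)) :=
  Finset.univ.filter fun R => IsOutForest W R ∧ (∀ e ∈ R, e.2 ∉ K) ∧
    (K.card - 1) + R.card = maxArcs W ∧ ∃ k ∈ K, FReach R k j

lemma mem_outerForests {j : Fin n} : R ∈ outerForests W K j ↔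
    IsOutForest W R ∧ (∀ e ∈ R, e.2 ∉ K) ∧
      (K.card - 1) + R.card = maxArcs W ∧ ∃ k ∈ K, FReach R k j := by
  simp [outerForests]

lemma IsOutForest.card_le_maxArcs (h : IsOutForest W F) : F.card ≤ maxArcs W :=
  Finset.le_sup (f := Finset.card) (by simpa [allOutForests] using h)

/-- If `T` spans `K` from `k`, then `k` reaches in `T ∪ R` exactly what `K` reaches in `R`. -/
lemma freach_union_iff {k : Fin n} (hk : k ∈ K) (hT : T ∈ knotTrees W K k) (j : Fin n) :
    FReach (T ∪ R) k j ↔ ∃ k' ∈ K, FReach R k' j := by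
  rw [mem_knotTrees] at hT
  constructor
  · intro h
    induction h with
    | refl => exact ⟨k, hk, .refl⟩
    | @tail a b _ hab ih =>
      rcases Finset.mem_union.1 hab with h | h
      · exact ⟨b, (hT.2.1 _ h).2, .refl⟩
      · obtain ⟨k', hk', h'⟩ := ih
        exact ⟨k', hk', Relation.ReflTransGen.tail h' h⟩
  · rintro ⟨k', hk', h⟩
    have h1 : FReach (T ∪ R) k k' :=
      Relation.ReflTransGen.mono (fun x y hxy => Finset.mem_union_left _ hxy) _ _ (hT.2.2 k' hk')
    have h2 : FReach (T ∪ R) k' j :=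
      Relation.ReflTransGen.mono (fun x y hxy => Finset.mem_union_right _ hxy) _ _ h
    exact Relation.ReflTransGen.trans h1 h2

/-- The part inside a source knot `K` of a maximum out-forest with root `k ∈ K` spans `K`:
replacing it by a spanning tree of `K` cannot increase the number of arcs, so every vertex of
`K` other than `k` must already have an incoming arc. -/
lemma filter_mem_knotTrees (hK : IsSourceKnot W K) {k : Fin n} (hk : k ∈ K)
    (hF : IsOutForest W F) (hcard : F.card = maxArcs W) (hroot : ∀ e ∈ F, e.2 ≠ k) :
    F.filter (fun e => e.2 ∈ K) ∈ knotTrees W K k := by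
  have hT' : IsOutForest W (F.filter fun e => e.2 ∈ K) := hF.subset_s12 (Finset.filter_subset _ _)
  have hTK : ∀ e ∈ F.filter (fun e => e.2 ∈ K), e.1 ∈ K ∧ e.2 ∈ K := fun e he => by
    obtain ⟨heF, he2⟩ := Finset.mem_filter.1 he
    exact ⟨hK.2 _ _ he2 (hF.1 e heF), he2⟩
  refine mem_knotTrees.2 ⟨hT', hTK, hT'.reach_of_parents ?_⟩
  obtain ⟨T, hT⟩ := knotTrees_nonempty hK hk
  have hTm := mem_knotTrees.1 hT
  have hRK : ∀ e ∈ F.filter (fun e => ¬ e.2 ∈ K), e.2 ∉ K := fun e he =>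
    (Finset.mem_filter.1 he).2
  have hle := (hTm.1.union (hF.subset_s12 (Finset.filter_subset _ _)) hTm.2.1 hRK).card_le_maxArcs
  rw [Finset.card_union_of_disjoint (disjoint_of_heads hTm.2.1 hRK), ← hcard,
    ← Finset.card_filter_add_card_filter_not (s := F) (fun e => e.2 ∈ K),
    knotTrees_card hT] at hle
  have himg : (F.filter fun e => e.2 ∈ K).image Prod.snd = K.erase k := by
    apply Finset.eq_of_subset_of_card_le
    · intro v hv
      obtain ⟨e, he, rfl⟩ := Finset.mem_image.1 hv
      exact Finset.mem_erase.2 ⟨hroot e (Finset.mem_filter.1 he).1, (hTK e he).2⟩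
    · rw [Finset.card_image_of_injOn hT'.injOn_snd]
      omega
  intro v hv hvk
  obtain ⟨e, he, rfl⟩ := Finset.mem_image.1 (himg ▸ Finset.mem_erase.2 ⟨hvk, hv⟩)
  exact ⟨e.1, (hTK e he).1, he⟩

/-- The row of a vertex `k` of a source knot in the matrix of maximum out-forests is
`w(𝒯^k)` times a row that depends on the knot only. -/
lemma Qmat_maxArcs_eq (hK : IsSourceKnot W K) {k : Fin n} (hk : k ∈ K) (j : Fin n) :
    Qmat W (maxArcs W) k j = wtSet W (knotTrees W K k) * wtSet W (outerForests W K j) := by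
  classical
  have hmem : ∀ F, F ∈ (outForests W (maxArcs W)).filter (fun F => inTreeOf F k j) ↔
      (IsOutForest W F ∧ F.card = maxArcs W) ∧ inTreeOf F k j := by
    simp [outForests]
  unfold Qmat wtSet
  rw [Finset.sum_mul_sum, ← Finset.sum_product']
  refine Finset.sum_bij' (fun F _ => (F.filter (fun e => e.2 ∈ K), F.filter (fun e => ¬ e.2 ∈ K)))
    (fun p _ => p.1 ∪ p.2) ?_ ?_ ?_ ?_ ?_
  · intro F hF
    obtain ⟨⟨hF, hcard⟩, hroot, hreach⟩ := (hmem F).1 hF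
    have hT := filter_mem_knotTrees hK hk hF hcard hroot
    refine Finset.mem_product.2 ⟨hT, mem_outerForests.2 ⟨hF.subset_s12 (Finset.filter_subset _ _),
      fun e he => (Finset.mem_filter.1 he).2, ?_, ?_⟩⟩
    · rw [← Finset.card_erase_of_mem hk, ← knotTrees_card hT,
        Finset.card_filter_add_card_filter_not, hcard]
    · rw [← freach_union_iff hk hT, Finset.filter_union_filter_not_eq]
      exact hreach
  · rintro ⟨T, R⟩ hp
    obtain ⟨hT, hR⟩ := Finset.mem_product.1 hp
    have hTm := mem_knotTrees.1 hT
    obtain ⟨hRf, hRK, hc, hr⟩ := mem_outerForests.1 hR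
    refine (hmem _).2 ⟨⟨hTm.1.union hRf hTm.2.1 hRK, ?_⟩, ?_, (freach_union_iff hk hT j).2 hr⟩
    · rw [Finset.card_union_of_disjoint (disjoint_of_heads hTm.2.1 hRK), knotTrees_card hT,
        Finset.card_erase_of_mem hk, hc]
    · intro e he
      rcases Finset.mem_union.1 he with he | he
      · exact knotTrees_root hT e he
      · rintro rfl
        exact hRK e he hk
  · intro F _
    exact Finset.filter_union_filter_not_eq _ _
  · rintro ⟨T, R⟩ hp
    obtain ⟨hT, hR⟩ := Finset.mem_product.1 hp
    have hTK := (mem_knotTrees.1 hT).2.1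
    have hRK := (mem_outerForests.1 hR).2.1
    refine Prod.ext ?_ ?_
    · ext e
      simp only [Finset.mem_filter, Finset.mem_union]
      have := hTK e
      have := hRK e
      tauto
    · ext e
      simp only [Finset.mem_filter, Finset.mem_union]
      have := hTK e
      have := hRK e
      tauto
  · intro F _
    exact (Finset.prod_filter_mul_prod_filter_not F (fun e => e.2 ∈ K) _).symm

end Aux

/-- Let `K` be a source knot of `Γ` and `k₁, k₂ ∈ K`. Then rows `k₁` and
`k₂` of `J̃` are proportional: `J̃_{k₂•} = (w(𝒯^{k₂})/w(𝒯^{k₁})) · J̃_{k₁•}`, i.e.,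
`J̃_{k₂j}·w(𝒯^{k₁}) = J̃_{k₁j}·w(𝒯^{k₂})` for every vertex `j`. -/
theorem Jtil_rows_proportional (n : ℕ) (hn : 1 < n)
    (W : Matrix (Fin n) (Fin n) ℝ)
    (hW0 : ∀ i j, 0 ≤ W i j) (hWd : ∀ i, W i i = 0)
    (K : Finset (Fin n)) (hK : IsSourceKnot W K)
    (k₁ k₂ : Fin n) (hk₁ : k₁ ∈ K) (hk₂ : k₂ ∈ K) :
    (∀ j : Fin n,
      Jtil W k₂ j =
        (wtSet W (knotTrees W K k₂) / wtSet W (knotTrees W K k₁)) * Jtil W k₁ j) ∧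
    (∀ j : Fin n,
      Jtil W k₂ j * wtSet W (knotTrees W K k₁) =
        Jtil W k₁ j * wtSet W (knotTrees W K k₂)) := by
  have hpos := (knotTrees_wt_pos hK hk₁).ne'
  have hJ : ∀ k ∈ K, ∀ j, Jtil W k j = (sigma W (maxArcs W))⁻¹ *
      (wtSet W (knotTrees W K k) * wtSet W (outerForests W K j)) := fun k hk j => by
    simp [Jtil, Qmat_maxArcs_eq hK hk j]
  refine ⟨fun j => ?_, fun j => ?_⟩
  · rw [hJ k₁ hk₁, hJ k₂ hk₂]
    field_simp
  · rw [hJ k₁ hk₁, hJ k₂ hk₂]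
    ring

end ForestMatrix
end
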